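/- arXiv:2212.00699 — 5 statements merged into one kernel-verified Lean document; each statement's English description precedes it below -/
import Mathlib

section
/- Let G = (N, 𝒳, 𝒰) be a finite game and 𝒪 = O_1 × ⋯ × O_n a rectangular strategy profile region such that G is equitable with respect to 𝒪. If a payment promise 𝒱 implements 𝒪 (not necessarily exactly) and δ = max over o ∈ 𝒪 of Σ_{i∈N} V_i(o), then there exists a payment promise 𝒱* that implements 𝒪 exactly and satisfies cost(𝒱*) = δ. -/
/-!
Each player's domination relation is a strict order on a finite set, so every strategy `x` is weakly
beaten by some undominated one (`exists_undominated_ge`). Undominated profiles being contained in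
`rectSet O`, all undominated strategies of `G[V]` lie in `O` (`mem_of_undominated`).

The new promise `W i` differs from `V i` only when player `i` plays in `O i` while some opponent
leaves `O`; there it tops up the utility of player `i` to `B + 1`, or to `B + 2` on one distinguished
column `g i x` of the strategy `x`, where `B` bounds all `|U| + |V|`. Equitability is exactly what
makes it possible to choose the columns `g i x` distinct for distinct `x ∈ O i`.
* A strategy `x ∈ O i` is the unique best response at its column, hence undominated.
* A strategy `x ∉ O i` is dominated by an undominated `y ∈ O i` of `G[V]` with `y ≥ x`: on the
  columns inside `O` nothing has changed, and elsewhere `y` is now strictly better; such columns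
  exist because `O i` is nonempty.
* On `rectSet O` we have `W = V`, so the cost of `W` is `maxPay V O`.
-/

/-- In a game with player set `ι` and strategy sets `S i`, strategy `x` of player `i`
(weakly) dominates strategy `y`: `x` is at least as good against every profile of the
other players' strategies and strictly better against at least one. -/
def Dominates {ι : Type*} [DecidableEq ι] {S : ι → Type*}
    (U : ι → (∀ j, S j) → ℝ) (i : ι) (x y : S i) : Prop :=
  (∀ σ : ∀ j, S j, U i (Function.update σ i y) ≤ U i (Function.update σ i x)) ∧
  (∃ σ : ∀ j, S j, U i (Function.update σ i y) < U i (Function.update σ i x))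

/-- A strategy of player `i` is undominated if no strategy of player `i` dominates it. -/
def Undominated {ι : Type*} [DecidableEq ι] {S : ι → Type*}
    (U : ι → (∀ j, S j) → ℝ) (i : ι) (x : S i) : Prop :=
  ¬ ∃ y : S i, Dominates U i y x

/-- The set `𝒳⋆` of strategy profiles consisting entirely of undominated strategies. -/
def UndomProfiles {ι : Type*} [DecidableEq ι] {S : ι → Type*}
    (U : ι → (∀ j, S j) → ℝ) : Set (∀ j, S j) :=
  {σ | ∀ i, Undominated U i (σ i)}

/-- The cost of a payment promise `V` for the game with utilities `U`:
the maximum, over undominated profiles of the modified game `G[V]`,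
of the total payment. -/
noncomputable def gameCost {ι : Type*} [DecidableEq ι] [Fintype ι] {S : ι → Type*}
    (U V : ι → (∀ j, S j) → ℝ) : ℝ :=
  sSup ((fun σ => ∑ i, V i σ) '' UndomProfiles (fun i σ => U i σ + V i σ))

/-- The rectangular strategy-profile region `O_1 × ⋯ × O_n`. -/
def rectSet {ι : Type*} {S : ι → Type*} (O : ∀ i, Set (S i)) : Set (∀ j, S j) :=
  {σ | ∀ i, σ i ∈ O i}

/-- The game is equitable w.r.t. the rectangular region `O`: for each player `i`,
`|O_i| ≤ |𝒳₋ᵢ \ 𝒪₋ᵢ|`. -/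
def Equitable {ι : Type*} {S : ι → Type*} (O : ∀ i, Set (S i)) : Prop :=
  ∀ i : ι, (O i).ncard ≤
    Set.ncard {σ : (j : {j : ι // j ≠ i}) → S j.1 | ∃ j, σ j ∉ O j.1}

/-- The worst-case payment over the region `O`: `max_{o ∈ 𝒪} Σ_i V_i(o)`. -/
noncomputable def maxPay {ι : Type*} [Fintype ι] {S : ι → Type*}
    (V : ι → (∀ j, S j) → ℝ) (O : ∀ i, Set (S i)) : ℝ :=
  sSup ((fun o => ∑ i, V i o) '' rectSet O)

theorem exists_undominated_ge {ι : Type*} [DecidableEq ι] {S : ι → Type*} (i : ι) [Finite (S i)]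
    (U : ι → (∀ j, S j) → ℝ) (x : S i) :
    ∃ y, Undominated U i y ∧
      ∀ σ, U i (Function.update σ i x) ≤ U i (Function.update σ i y) := by
  have : IsTrans (S i) (Dominates U i) :=
    ⟨fun a b c hab hbc => ⟨fun σ => (hbc.1 σ).trans (hab.1 σ),
      hbc.2.imp fun σ h => h.trans_le (hab.1 σ)⟩⟩
  have : Std.Irrefl (Dominates U i) := ⟨fun a h => h.2.elim fun σ h => lt_irrefl _ h⟩
  induction x using (Finite.wellFounded_of_trans_of_irrefl (Dominates U i)).induction with
  | _ x ih =>
    by_cases hx : Undominated U i x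
    · exact ⟨x, hx, fun _ => le_rfl⟩
    · obtain ⟨z, hz⟩ := not_not.mp hx
      obtain ⟨y, hy, hzy⟩ := ih z hz
      exact ⟨y, hy, fun σ => (hz.1 σ).trans (hzy σ)⟩

/-- A rectangular region containing all undominated profiles contains each undominated strategy
in the corresponding factor, since such a strategy extends to an undominated profile. -/
theorem mem_of_undominated {ι : Type*} [DecidableEq ι] {S : ι → Type*} [∀ i, Finite (S i)]
    [∀ i, Nonempty (S i)] {U : ι → (∀ j, S j) → ℝ} {O : ∀ i, Set (S i)}
    (h : UndomProfiles U ⊆ rectSet O) {i : ι} {x : S i} (hx : Undominated U i x) : x ∈ O i := by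
  choose y hy using fun j => exists_undominated_ge j U (Classical.arbitrary (S j))
  have hmem : Function.update y i x ∈ UndomProfiles U := by
    intro j
    by_cases hj : j = i
    · subst hj; simpa using hx
    · simpa [hj] using (hy j).1
  simpa using h hmem i

theorem exists_injOn_mapsTo_of_ncard_le {α β : Type*} [Finite α] [Finite β] [Nonempty β]
    {s : Set α} {t : Set β} (h : s.ncard ≤ t.ncard) :
    ∃ g : α → β, Set.InjOn g s ∧ Set.MapsTo g s t := by
  classical
  have := Fintype.ofFinite s
  have := Fintype.ofFinite t
  rw [← Nat.card_coe_set_eq, ← Nat.card_coe_set_eq, Nat.card_eq_fintype_card,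
    Nat.card_eq_fintype_card] at h
  obtain ⟨f⟩ := Function.Embedding.nonempty_of_card_le h
  refine ⟨fun a => if ha : a ∈ s then f ⟨a, ha⟩ else Classical.arbitrary β, ?_, ?_⟩
  · intro a ha b hb hab
    simp only [ha, hb, dite_true] at hab
    exact congrArg Subtype.val (f.injective (Subtype.ext hab))
  · intro a ha
    simp [ha]

/-- in an equitable game, any (not necessarily exact) implementation `V` of
the rectangular region `O` can be turned into an exact implementation `W` whose cost
equals `δ = max_{o ∈ 𝒪} Σ_i V_i(o)`. -/
theorem exists_exact_implementation {ι : Type*} [DecidableEq ι] [Fintype ι]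
    {S : ι → Type*} [∀ i, Fintype (S i)] [∀ i, Nonempty (S i)]
    (U : ι → (∀ j, S j) → ℝ) (O : ∀ i, Set (S i))
    (heq : Equitable O)
    (V : ι → (∀ j, S j) → ℝ) (hV : ∀ i σ, 0 ≤ V i σ)
    (himpl : UndomProfiles (fun i σ => U i σ + V i σ) ⊆ rectSet O) :
    ∃ W : ι → (∀ j, S j) → ℝ,
      (∀ i σ, 0 ≤ W i σ) ∧
      UndomProfiles (fun i σ => U i σ + W i σ) = rectSet O ∧
      gameCost U W = maxPay V O := by
  classical
  obtain ⟨B, hB⟩ := Finite.exists_le (fun p : ι × (∀ j, S j) => |U p.1 p.2| + |V p.1 p.2|)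
  have hUV : ∀ i σ, U i σ + V i σ ≤ B := fun i σ =>
    (add_le_add (le_abs_self _) (le_abs_self _)).trans (hB (i, σ))
  have hU : ∀ i σ, U i σ ≤ B := fun i σ => by linarith [hUV i σ, hV i σ]
  choose g hginj hgmaps using fun i => exists_injOn_mapsTo_of_ncard_le (heq i)
  -- `r i σ` is the opponents' column `σ₋ᵢ`
  let r : ∀ i, (∀ j, S j) → ((j : {j : ι // j ≠ i}) → S j.1) := fun i σ j => σ j.1
  have hr : ∀ i σ x, r i (Function.update σ i x) = r i σ := fun i σ x =>
    funext fun j => Function.update_of_ne j.2 _ _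
  -- every column is the column of some profile
  have hrsurj : ∀ i (c : (j : {j : ι // j ≠ i}) → S j.1), ∃ σ, r i σ = c := fun i c =>
    ⟨fun j => if h : j ≠ i then c ⟨j, h⟩ else Classical.arbitrary _,
      funext fun j => by simp [r, j.2]⟩
  let T : ∀ i, Set ((j : {j : ι // j ≠ i}) → S j.1) := fun i => {c | ∃ j, c j ∉ O j.1}
  have hgmaps : ∀ i x, x ∈ O i → g i x ∈ T i := fun i x hx => hgmaps i hx
  let W : ι → (∀ j, S j) → ℝ := fun i σ =>
    if σ i ∈ O i ∧ r i σ ∈ T i then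
      (if r i σ = g i (σ i) then B + 2 else B + 1) - U i σ
    else V i σ
  -- values of the utility in `G[W]` inside and outside the modified area
  have hin : ∀ i σ x, x ∈ O i → r i σ ∈ T i →
      U i (Function.update σ i x) + W i (Function.update σ i x) =
        if r i σ = g i x then B + 2 else B + 1 := by
    intro i σ x hx hσ
    simp [W, hr, hx, hσ]
  have hout : ∀ i σ x, ¬ (x ∈ O i ∧ r i σ ∈ T i) →
      W i (Function.update σ i x) = V i (Function.update σ i x) := by
    intro i σ x h
    simp only [W, hr, Function.update_self, if_neg h]
  have hundom : ∀ i x, Undominated (fun i σ => U i σ + W i σ) i x ↔ x ∈ O i := by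
    intro i x
    constructor
    · intro hx
      by_contra hxO
      obtain ⟨y, hy, hxy⟩ := exists_undominated_ge i (fun i σ => U i σ + V i σ) x
      have hyO := mem_of_undominated himpl hy
      have hlt : ∀ σ, r i σ ∈ T i →
          U i (Function.update σ i x) + W i (Function.update σ i x) <
            U i (Function.update σ i y) + W i (Function.update σ i y) := by
        intro σ hσ
        rw [hin i σ y hyO hσ, hout i σ x (fun h => hxO h.1)]
        have := hUV i (Function.update σ i x)
        split_ifs <;> linarith
      refine hx ⟨y, fun σ => ?_, ?_⟩
      · by_cases hσ : r i σ ∈ T i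
        · exact (hlt σ hσ).le
        · simp only [hout i σ x (fun h => hσ h.2), hout i σ y (fun h => hσ h.2)]
          exact hxy σ
      · obtain ⟨σ, hσ⟩ := hrsurj i (g i y)
        exact ⟨σ, hlt σ (hσ ▸ hgmaps i y hyO)⟩
    · rintro hx ⟨y, hle, σ', hlt⟩
      have hne : y ≠ x := by rintro rfl; exact lt_irrefl _ hlt
      obtain ⟨σ, hσ⟩ := hrsurj i (g i x)
      have hσT : r i σ ∈ T i := hσ ▸ hgmaps i x hx
      have h := hle σ
      simp only [hin i σ x hx hσT, if_pos hσ] at h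
      by_cases hy : y ∈ O i
      · have hg : r i σ ≠ g i y := fun h' => hne (hginj i hy hx (h'.symm.trans hσ))
        rw [hin i σ y hy hσT, if_neg hg] at h
        linarith
      · rw [hout i σ y (fun h => hy h.1)] at h
        linarith [hUV i (Function.update σ i y)]
  have hexact : UndomProfiles (fun i σ => U i σ + W i σ) = rectSet O :=
    Set.ext fun σ => forall_congr' fun i => hundom i (σ i)
  refine ⟨W, fun i σ => ?_, hexact, ?_⟩
  · simp only [W]
    have := hU i σ
    split_ifs
    · linarith
    · linarith
    · exact hV i σ
  · unfold gameCost maxPay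
    rw [hexact]
    congr 1
    refine Set.image_congr fun σ hσ => Finset.sum_congr rfl fun i _ => if_neg ?_
    rintro ⟨-, j, hj⟩
    exact hj (hσ j.1)
end

section
/- Consider the two-player game G constructed from an Exact Cover by 3-Sets instance (n̂, 𝒜, 𝒞) as described, with desired sets O_1 = O_2 = {c_j^{a_i} : C_j ∈ 𝒞, a_i ∈ C_j}. If (n̂, 𝒜, 𝒞) admits an exact cover, then there exists a payment promise 𝒱 such that 𝒳⋆_{G[𝒱]} ⊆ O_1 × O_2 and cost(𝒱) = 0. -/
/-- `S` is an exact cover of the X3C instance with `3 * nh` elements (indexed by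
`ZMod m`, `m = 3 * nh`) and sets `C`: `|S| = nh` and every element is covered. -/
def IsExactCover (m nh : ℕ) (C : ZMod m → Finset (ZMod m)) (S : Set (ZMod m)) : Prop :=
  S.ncard = nh ∧ ∀ a : ZMod m, ∃ j ∈ S, a ∈ C j

/-- The common strategy set of the two players: an element strategy `a_i` (left) or a
strategy `c_j^{a_i}` for a set `C_j` and an element `a_i ∈ C_j` (right). -/
def X3CStrat (m : ℕ) (C : ZMod m → Finset (ZMod m)) : Type :=
  ZMod m ⊕ {p : ZMod m × ZMod m // p.2 ∈ C p.1}

/-- Utility of player 1 (first argument is player 1's strategy):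
`U_1(a_i, c_j^{a_i}) = 2` and `U_1(a_i, c_j^{a_m}) = 1` for `a_m ∈ C_j ∖ {a_i}`
(whenever `a_i ∈ C_j`), `U_1(c_j^{a_i}, c_j^{a_i}) = 2` and
`U_1(c_j^{a_i}, c_j^{a_m}) = 1` for `a_m ∈ C_j ∖ {a_i}`; all other values are 0. -/
def xU1 (m : ℕ) (C : ZMod m → Finset (ZMod m)) :
    X3CStrat m C → X3CStrat m C → ℝ
  | Sum.inl a, Sum.inr p => if a ∈ C p.1.1 then (if p.1.2 = a then 2 else 1) else 0
  | Sum.inr q, Sum.inr p =>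
      if p.1.1 = q.1.1 then (if p.1.2 = q.1.2 then 2 else 1) else 0
  | _, _ => 0

/-- Utility of player 2 (first argument is player 1's strategy):
`U_2(c_p^{a_{i-1}}, a_i) = 1` and `U_2(c_p^{a_{i-1}}, c_j^{a_i}) = 1`
(indices mod `3 nh`); all other values are 0. -/
def xU2 (m : ℕ) (C : ZMod m → Finset (ZMod m)) :
    X3CStrat m C → X3CStrat m C → ℝ
  | Sum.inr q, Sum.inl a => if q.1.2 = a - 1 then 1 else 0
  | Sum.inr q, Sum.inr p => if q.1.2 = p.1.2 - 1 then 1 else 0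
  | _, _ => 0

/-- The two-player game built from the X3C instance. -/
def xGame (m : ℕ) (C : ZMod m → Finset (ZMod m)) :
    Fin 2 → (Fin 2 → X3CStrat m C) → ℝ :=
  fun i σ => if i = 0 then xU1 m C (σ 0) (σ 1) else xU2 m C (σ 0) (σ 1)

/-- The desired strategy set `O_1 = O_2 = {c_j^{a_i} : C_j ∈ 𝒞, a_i ∈ C_j}`. -/
def xDesired (m : ℕ) (C : ZMod m → Finset (ZMod m)) : Set (X3CStrat m C) :=
  Set.range Sum.inr

/-- The `nh` triples of a cover of `3 * nh` elements are pairwise disjoint. -/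
lemma IsExactCover.eq_of_mem {m nh : ℕ} [NeZero m] (hm : m = 3 * nh)
    {C : ZMod m → Finset (ZMod m)} (hC : ∀ j : ZMod m, (C j).card = 3)
    {S : Set (ZMod m)} (hS : IsExactCover m nh C S) {j k a : ZMod m}
    (hj : j ∈ S) (hk : k ∈ S) (haj : a ∈ C j) (hak : a ∈ C k) : j = k := by
  classical
  obtain ⟨hcard, hcov⟩ := hS
  -- The projection from the incidences `(j, a)`, `a ∈ C j`, `j ∈ S`, to `a` is onto, and both
  -- sides have `3 * nh` elements, so it is injective.
  let T : Finset (Σ _ : ZMod m, ZMod m) := S.toFinset.sigma C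
  have hT : T.card = m := by
    rw [Set.ncard_eq_toFinset_card'] at hcard
    simp only [T, Finset.card_sigma, hC, Finset.sum_const, smul_eq_mul, hcard]
    omega
  have himg : T.image Sigma.snd = Finset.univ := by
    ext b
    obtain ⟨i, hi, hb⟩ := hcov b
    simp only [Finset.mem_image, Finset.mem_univ, iff_true]
    exact ⟨⟨i, b⟩, by simp [T, hi, hb], rfl⟩
  have hinj : Set.InjOn Sigma.snd (T : Set (Σ _ : ZMod m, ZMod m)) := by
    rw [← Finset.card_image_iff, himg, hT, Finset.card_univ, ZMod.card]
  have h := @hinj ⟨j, a⟩ (by simp [T, hj, haj]) ⟨k, a⟩ (by simp [T, hk, hak]) rfl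
  exact congrArg Sigma.fst h

/-- The element `a` underlying the strategies `a` and `c_j^a`. -/
def X3CStrat.elt {m : ℕ} {C : ZMod m → Finset (ZMod m)} : X3CStrat m C → ZMod m
  | Sum.inl a => a
  | Sum.inr p => p.1.2

/-- The strategies `c_j^a` with `j ∈ S`. -/
def X3CStrat.Covering {m : ℕ} {C : ZMod m → Finset (ZMod m)} (S : Set (ZMod m)) :
    X3CStrat m C → Prop
  | Sum.inl _ => False
  | Sum.inr p => p.1.1 ∈ S

/-- The element strategies `a`, which are the undesired ones. -/
def X3CStrat.IsElt {m : ℕ} {C : ZMod m → Finset (ZMod m)} : X3CStrat m C → Prop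
  | Sum.inl _ => True
  | Sum.inr _ => False

open Classical in
/-- The payment promise attached to a cover `S`: player 1 receives `3` for a covering strategy
against a non-covering one, and player 2 receives `1` for a covering strategy against an element
strategy. -/
noncomputable def coverPayment {m : ℕ} (C : ZMod m → Finset (ZMod m)) (S : Set (ZMod m)) :
    Fin 2 → (Fin 2 → X3CStrat m C) → ℝ :=
  fun i σ => if i = 0 then (if (σ 0).Covering S ∧ ¬ (σ 1).Covering S then 3 else 0)
    else (if (σ 1).Covering S ∧ (σ 0).IsElt then 1 else 0)

lemma xU2_congr {m : ℕ} {C : ZMod m → Finset (ZMod m)} {x y z : X3CStrat m C}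
    (h : y.elt = z.elt) : xU2 m C x y = xU2 m C x z := by
  rcases x with x | x <;> rcases y with y | y <;> rcases z with z | z <;>
    simp_all [X3CStrat.elt, xU2]

lemma xU1_le_two {m : ℕ} {C : ZMod m → Finset (ZMod m)} (x y : X3CStrat m C) :
    xU1 m C x y ≤ 2 := by
  rcases x with x | x <;> rcases y with y | y <;> simp only [xU1] <;> (try split_ifs) <;> norm_num

lemma xU1_nonneg {m : ℕ} {C : ZMod m → Finset (ZMod m)} (x y : X3CStrat m C) :
    0 ≤ xU1 m C x y := by
  rcases x with x | x <;> rcases y with y | y <;> simp only [xU1] <;> (try split_ifs) <;> norm_num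

lemma dominates_zero {X : Type*} {U : Fin 2 → (Fin 2 → X) → ℝ} {x x' : X}
    (hle : ∀ y, U 0 ![x', y] ≤ U 0 ![x, y]) (hlt : ∃ y, U 0 ![x', y] < U 0 ![x, y]) :
    Dominates (S := fun _ => X) U 0 x x' := by
  have h (σ : Fin 2 → X) (z : X) : Function.update σ 0 z = ![z, σ 1] := by
    ext i; fin_cases i <;> simp
  obtain ⟨y, hy⟩ := hlt
  exact ⟨fun σ => by simpa only [h] using hle (σ 1), fun _ => y, by simpa only [h] using hy⟩

lemma dominates_one {X : Type*} {U : Fin 2 → (Fin 2 → X) → ℝ} {y y' : X}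
    (hle : ∀ x, U 1 ![x, y'] ≤ U 1 ![x, y]) (hlt : ∃ x, U 1 ![x, y'] < U 1 ![x, y]) :
    Dominates (S := fun _ => X) U 1 y y' := by
  have h (σ : Fin 2 → X) (z : X) : Function.update σ 1 z = ![σ 0, z] := by
    ext i; fin_cases i <;> simp
  obtain ⟨x, hx⟩ := hlt
  exact ⟨fun σ => by simpa only [h] using hle (σ 0), fun _ => x, by simpa only [h] using hx⟩

open Classical in
lemma payoff_zero {m : ℕ} {C : ZMod m → Finset (ZMod m)} {S : Set (ZMod m)}
    (x y : X3CStrat m C) : xGame m C 0 ![x, y] + coverPayment C S 0 ![x, y] =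
      xU1 m C x y + if x.Covering S ∧ ¬ y.Covering S then 3 else 0 := rfl

open Classical in
lemma payoff_one {m : ℕ} {C : ZMod m → Finset (ZMod m)} {S : Set (ZMod m)}
    (x y : X3CStrat m C) : xGame m C 1 ![x, y] + coverPayment C S 1 ![x, y] =
      xU2 m C x y + if y.Covering S ∧ x.IsElt then 1 else 0 := rfl

/-- For player 2, a non-covering `y` is dominated by the covering strategy of its underlying
element. -/
lemma covering_of_undominated {m nh : ℕ} {C : ZMod m → Finset (ZMod m)} {S : Set (ZMod m)}
    (hS : IsExactCover m nh C S) {y : X3CStrat m C}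
    (hy : Undominated (fun i σ => xGame m C i σ + coverPayment C S i σ) 1 y) :
    y.Covering S := by
  by_contra hn
  obtain ⟨j, hj, ha⟩ := hS.2 y.elt
  let z : X3CStrat m C := Sum.inr ⟨(j, y.elt), ha⟩
  have hz : z.Covering S := hj
  have hU (x : X3CStrat m C) : xU2 m C x y = xU2 m C x z := xU2_congr rfl
  obtain ⟨x₀, h0⟩ : ∃ x₀ : X3CStrat m C, x₀.IsElt := ⟨Sum.inl 0, trivial⟩
  refine hy ⟨z, dominates_one (fun x => ?_) ⟨x₀, ?_⟩⟩
  · rw [payoff_one, payoff_one, hU, if_neg fun h => hn h.1]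
    gcongr
    split_ifs <;> norm_num
  · rw [payoff_one, payoff_one, hU, if_neg fun h => hn h.1, if_pos ⟨hz, h0⟩]
    norm_num

/-- For player 1, the element strategy `a` is dominated by the covering strategy of `a`. -/
lemma not_isElt_of_undominated {m nh : ℕ} [NeZero m] (hm : m = 3 * nh)
    {C : ZMod m → Finset (ZMod m)} (hC : ∀ j : ZMod m, (C j).card = 3) {S : Set (ZMod m)}
    (hS : IsExactCover m nh C S) {x : X3CStrat m C}
    (hx : Undominated (fun i σ => xGame m C i σ + coverPayment C S i σ) 0 x) :
    ¬ x.IsElt := by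
  intro hxE
  obtain ⟨j, hj, ha⟩ := hS.2 x.elt
  let z : X3CStrat m C := Sum.inr ⟨(j, x.elt), ha⟩
  have hz : z.Covering S := hj
  have hn : ¬ x.Covering S := by
    rcases x with a | p
    · exact id
    · exact hxE.elim
  -- Only sets of the cover occur here, and `C j` is the only one of them containing `x.elt`.
  have hU (y : X3CStrat m C) (hy : y.Covering S) : xU1 m C x y = xU1 m C z y := by
    rcases x with a | p
    swap
    · exact hxE.elim
    rcases y with b | q
    · exact hy.elim
    · have hiff : a ∈ C q.1.1 ↔ q.1.1 = j :=
        ⟨fun h => hS.eq_of_mem hm hC hy hj h ha, fun h => h ▸ ha⟩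
      simp only [xU1, z, hiff, X3CStrat.elt]
      -- The two sides differ only in their `Decidable` instances.
      congr
  have hlt (y : X3CStrat m C) (hy : ¬ y.Covering S) :
      xGame m C 0 ![x, y] + coverPayment C S 0 ![x, y] <
        xGame m C 0 ![z, y] + coverPayment C S 0 ![z, y] := by
    rw [payoff_zero, payoff_zero, if_neg fun h => hn h.1, if_pos ⟨hz, hy⟩]
    linarith [xU1_le_two x y, xU1_nonneg z y]
  refine hx ⟨z, dominates_zero (fun y => ?_) ⟨Sum.inl 0, hlt _ id⟩⟩
  by_cases hy : y.Covering S
  · rw [payoff_zero, payoff_zero, if_neg fun h => h.2 hy, if_neg fun h => h.2 hy, hU y hy]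
  · exact (hlt y hy).le

/-- if the X3C instance admits an exact cover, then the constructed
two-player game has a payment promise implementing `O_1 × O_2` at cost 0. -/
theorem x3c_game_forward (m nh : ℕ) [NeZero m] (hm : m = 3 * nh)
    (C : ZMod m → Finset (ZMod m))
    (hC : ∀ j : ZMod m, (C j).card = 3)
    (hocc : ∀ a : ZMod m, Set.ncard {j : ZMod m | a ∈ C j} = 3)
    (hcover : ∃ S : Set (ZMod m), IsExactCover m nh C S) :
    ∃ V : Fin 2 → (Fin 2 → X3CStrat m C) → ℝ,
      (∀ i σ, 0 ≤ V i σ) ∧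
      UndomProfiles (fun i σ => xGame m C i σ + V i σ) ⊆
        rectSet (fun _ : Fin 2 => xDesired m C) ∧
      gameCost (xGame m C) V = 0 := by
  obtain ⟨S, hS⟩ := hcover
  have hP (σ) (hσ : σ ∈ UndomProfiles (fun i σ => xGame m C i σ + coverPayment C S i σ)) :
      ¬ (σ 0).IsElt ∧ (σ 1).Covering S :=
    ⟨not_isElt_of_undominated hm hC hS (hσ 0), covering_of_undominated hS (hσ 1)⟩
  refine ⟨coverPayment C S, fun i σ => ?_, fun σ hσ => ?_, ?_⟩
  · simp only [coverPayment]
    split_ifs <;> norm_num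
  · obtain ⟨h0, h1⟩ := hP σ hσ
    refine Fin.forall_fin_two.2 ⟨?_, ?_⟩
    · rcases h : σ 0 with a | p
      · rw [h] at h0
        exact (h0 trivial).elim
      · exact ⟨p, rfl⟩
    · rcases h : σ 1 with a | p
      · rw [h] at h1
        exact h1.elim
      · exact ⟨p, rfl⟩
  · have hzero : ∀ c ∈ (fun σ => ∑ i, coverPayment C S i σ) ''
        UndomProfiles (fun i σ => xGame m C i σ + coverPayment C S i σ), c = 0 := by
      rintro _ ⟨σ, hσ, rfl⟩
      obtain ⟨h0, h1⟩ := hP σ hσ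
      simp [coverPayment, h0, h1]
    -- These bounds hold for an empty set of reals too, so an undominated profile need not be exhibited.
    exact le_antisymm (Real.sSup_nonpos fun c hc => (hzero c hc).le)
      (Real.sSup_nonneg fun c hc => (hzero c hc).ge)
end

section
/- In the two-player game G constructed from an X3C instance, let 𝒱 be a payment promise with 𝒳⋆_{G[𝒱]} ⊆ O_1 × O_2 and cost(𝒱) = 0, and let C_j ∈ 𝒞 and a_i ∈ C_j be such that c_j^{a_i} is undominated for player 2 in G[𝒱]. Then: (i) c_j^{a_i} is undominated for player 1 in G[𝒱]; (ii) c_j^{a_i} dominates a_i for player 1 in G[𝒱]; (iii) for every set C_l ∈ 𝒞 ∖ {C_j} with a_i ∈ C_l, the strategy c_l^{a_i} is dominated for player 2 in G[𝒱]. -/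
section General

variable {ι : Type*} [DecidableEq ι] {S : ι → Type*}

theorem Dominates.trans {U : ι → (∀ j, S j) → ℝ} {i : ι} {x y z : S i}
    (hxy : Dominates U i x y) (hyz : Dominates U i y z) : Dominates U i x z := by
  refine ⟨fun σ => (hyz.1 σ).trans (hxy.1 σ), ?_⟩
  obtain ⟨σ, hσ⟩ := hxy.2
  exact ⟨σ, (hyz.1 σ).trans_lt hσ⟩

theorem Dominates.irrefl {U : ι → (∀ j, S j) → ℝ} {i : ι} {x : S i} :
    ¬ Dominates U i x x := fun h => by
  obtain ⟨σ, hσ⟩ := h.2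
  exact lt_irrefl _ hσ

/-- Dominance is a strict order, so over a finite strategy set every dominated strategy has a
maximal, that is undominated, dominator. -/
theorem Dominates.exists_undominated_dominates {U : ι → (∀ j, S j) → ℝ} {i : ι} [Finite (S i)]
    {x y : S i} (h : Dominates U i x y) : ∃ d, Undominated U i d ∧ Dominates U i d y := by
  have : IsTrans (S i) (Dominates U i) := ⟨fun _ _ _ => Dominates.trans⟩
  have : Std.Irrefl (Dominates U i) := ⟨fun _ => Dominates.irrefl⟩
  have wf : WellFounded (Dominates U i) := Finite.wellFounded_of_trans_of_irrefl _
  obtain ⟨d, hd, hmin⟩ := wf.has_min {z | Dominates U i z y} ⟨x, h⟩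
  exact ⟨d, fun ⟨z, hz⟩ => hmin z (hz.trans hd) hz, hd⟩

/-- With finitely many profiles the supremum in `gameCost` is a genuine upper bound, so zero
cost forces every payment at an undominated profile to vanish. -/
theorem payment_eq_zero_of_gameCost [Fintype ι] [Finite (∀ j, S j)]
    {U V : ι → (∀ j, S j) → ℝ} (hV : ∀ i σ, 0 ≤ V i σ) (hcost : gameCost U V = 0)
    {σ : ∀ j, S j} (hσ : σ ∈ UndomProfiles (fun i σ => U i σ + V i σ)) (i : ι) :
    V i σ = 0 := by
  have h1 : ∑ k, V k σ ≤ gameCost U V :=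
    le_csSup (Set.toFinite _).bddAbove ⟨σ, hσ, rfl⟩
  have h2 : V i σ ≤ ∑ k, V k σ :=
    Finset.single_le_sum (fun k _ => hV k σ) (Finset.mem_univ i)
  linarith [hV i σ]

end General

instance instFiniteX3CStrat (m : ℕ) [NeZero m] (C : ZMod m → Finset (ZMod m)) :
    Finite (X3CStrat m C) :=
  inferInstanceAs (Finite (ZMod m ⊕ {p : ZMod m × ZMod m // p.2 ∈ C p.1}))

/-- If `d` dominates `a` for player 1, then against any column `c_j^a` at which player 1 is paid
nothing for playing `d`, the unmodified utility of `d` is at least `U_1(a, c_j^a) = 2`. -/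
theorem two_le_xU1_of_dominates {m : ℕ} {C : ZMod m → Finset (ZMod m)}
    {V : Fin 2 → (Fin 2 → X3CStrat m C) → ℝ} (hV : ∀ i σ, 0 ≤ V i σ)
    {j a : ZMod m} (ha : a ∈ C j) {d : X3CStrat m C}
    (hd : Dominates (S := fun _ => X3CStrat m C) (fun i σ => xGame m C i σ + V i σ) (0 : Fin 2)
      d (Sum.inl a))
    (h0 : V 0 ![d, Sum.inr ⟨(j, a), ha⟩] = 0) :
    2 ≤ xU1 m C d (Sum.inr ⟨(j, a), ha⟩) := by
  have e : ∀ x y z : X3CStrat m C, Function.update ![x, y] 0 z = ![z, y] := by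
    intro x y z
    ext k
    fin_cases k <;> rfl
  have h : xU1 m C (Sum.inl a) (Sum.inr ⟨(j, a), ha⟩) +
        V 0 ![Sum.inl a, Sum.inr ⟨(j, a), ha⟩] ≤
      xU1 m C d (Sum.inr ⟨(j, a), ha⟩) + V 0 ![d, Sum.inr ⟨(j, a), ha⟩] := by
    have h' := hd.1 ![d, Sum.inr ⟨(j, a), ha⟩]
    erw [e, e] at h'
    exact h'
  have h2 : xU1 m C (Sum.inl a) (Sum.inr ⟨(j, a), ha⟩) = 2 := by simp [xU1, ha]
  have hnn := hV 0 ![Sum.inl a, Sum.inr ⟨(j, a), ha⟩]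
  linarith

theorem pair_mem_undomProfiles {m : ℕ} {C : ZMod m → Finset (ZMod m)}
    {U : Fin 2 → (Fin 2 → X3CStrat m C) → ℝ} {x y : X3CStrat m C}
    (hx : Undominated (S := fun _ => X3CStrat m C) U 0 x)
    (hy : Undominated (S := fun _ => X3CStrat m C) U 1 y) :
    ![x, y] ∈ UndomProfiles (S := fun _ => X3CStrat m C) U := by
  intro i
  fin_cases i
  · exact hx
  · exact hy

/-- Parts (i) and (ii): the undominated dominator of `a` must be `c_j^a`. -/
theorem undominated_and_dominates {m : ℕ} [NeZero m] {C : ZMod m → Finset (ZMod m)}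
    {V : Fin 2 → (Fin 2 → X3CStrat m C) → ℝ} (hV : ∀ i σ, 0 ≤ V i σ)
    (himpl : UndomProfiles (fun i σ => xGame m C i σ + V i σ) ⊆
      rectSet (fun _ : Fin 2 => xDesired m C))
    (hcost : gameCost (xGame m C) V = 0)
    {j a : ZMod m} (ha : a ∈ C j)
    (hund : Undominated (S := fun _ => X3CStrat m C) (fun i σ => xGame m C i σ + V i σ)
      (1 : Fin 2) (Sum.inr ⟨(j, a), ha⟩)) :
    Undominated (S := fun _ => X3CStrat m C) (fun i σ => xGame m C i σ + V i σ) (0 : Fin 2)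
        (Sum.inr ⟨(j, a), ha⟩) ∧
      Dominates (S := fun _ => X3CStrat m C) (fun i σ => xGame m C i σ + V i σ) (0 : Fin 2)
        (Sum.inr ⟨(j, a), ha⟩) (Sum.inl a) := by
  have hdom : ∃ y, Dominates (S := fun _ => X3CStrat m C)
      (fun i σ => xGame m C i σ + V i σ) (0 : Fin 2) y (Sum.inl a) := by
    by_contra hna
    obtain ⟨q, hq⟩ := himpl (pair_mem_undomProfiles hna hund) 0
    exact Sum.inr_ne_inl hq
  obtain ⟨y, hy⟩ := hdom
  obtain ⟨d, hd, hda⟩ := hy.exists_undominated_dominates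
  have hmem := pair_mem_undomProfiles hd hund
  have h2 := two_le_xU1_of_dominates hV ha hda (payment_eq_zero_of_gameCost hV hcost hmem 0)
  obtain ⟨⟨⟨l, b⟩, hb⟩, hq⟩ := himpl hmem 0
  have hq' : Sum.inr ⟨(l, b), hb⟩ = d := hq
  subst hq'
  simp only [xU1] at h2
  -- Among the strategies `c_l^b`, only `c_j^a` has utility at least `2` against `c_j^a`.
  by_cases hjl : j = l
  · by_cases hab : a = b
    · subst hjl hab
      exact ⟨hd, hda⟩
    · norm_num [hjl, hab] at h2
  · norm_num [hjl] at h2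

/-- with a zero-cost implementation `𝒱` of `O_1 × O_2`, if `c_j^{a_i}` is
undominated for player 2 in `G[𝒱]`, then (i) it is undominated for player 1, (ii) it
dominates `a_i` for player 1, and (iii) for every other set `C_l ∋ a_i`, the strategy
`c_l^{a_i}` is dominated for player 2. -/
theorem x3c_claim1 (m nh : ℕ) [NeZero m] (hm : m = 3 * nh)
    (C : ZMod m → Finset (ZMod m))
    (hC : ∀ j : ZMod m, (C j).card = 3)
    (hocc : ∀ a : ZMod m, Set.ncard {j : ZMod m | a ∈ C j} = 3)
    (V : Fin 2 → (Fin 2 → X3CStrat m C) → ℝ)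
    (hV : ∀ i σ, 0 ≤ V i σ)
    (himpl : UndomProfiles (fun i σ => xGame m C i σ + V i σ) ⊆
      rectSet (fun _ : Fin 2 => xDesired m C))
    (hcost : gameCost (xGame m C) V = 0)
    (j a : ZMod m) (ha : a ∈ C j)
    (hund : Undominated (fun i σ => xGame m C i σ + V i σ) (1 : Fin 2)
      (Sum.inr ⟨(j, a), ha⟩)) :
    Undominated (fun i σ => xGame m C i σ + V i σ) (0 : Fin 2)
        (Sum.inr ⟨(j, a), ha⟩) ∧
      Dominates (fun i σ => xGame m C i σ + V i σ) (0 : Fin 2)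
        (Sum.inr ⟨(j, a), ha⟩) (Sum.inl a) ∧
      ∀ l : ZMod m, l ≠ j → ∀ hl : a ∈ C l,
        ¬ Undominated (fun i σ => xGame m C i σ + V i σ) (1 : Fin 2)
          (Sum.inr ⟨(l, a), hl⟩) := by
  obtain ⟨h1, h2⟩ := undominated_and_dominates hV himpl hcost ha hund
  refine ⟨h1, h2, fun l hlj hl hl_und => ?_⟩
  have h := two_le_xU1_of_dominates hV hl h2
    (payment_eq_zero_of_gameCost hV hcost (pair_mem_undomProfiles h1 hl_und) 0)
  norm_num [xU1, hlj] at h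
end

section
/- Consider the degree-three game G constructed from an Exact Cover by 3-Sets instance (n̂, 𝒜, 𝒞) as described, with desired sets O_{a_i} = {T_{a_i}} for every element player a_i and O_{C_j} = {T_{C_j}, F_{C_j}} for every set player C_j. If (n̂, 𝒜, 𝒞) admits an exact cover, then for every real δ ≥ 0 there exists a payment promise 𝒱 such that 𝒳⋆_{G[𝒱]} ⊆ ∏_{i∈N} O_i and cost(𝒱) ≤ δ. -/
/-- The utilities of the degree-three graphical game: players are elements (left) and
sets (right), every player plays a Boolean (`true` = the `T`-strategy). An element
player `a` receives 1 iff it plays its `F`-strategy and the number of sets containing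
`a` that play their `T`-strategy is 0, 2 or 3; set players always receive 0. -/
def dGame (m : ℕ) [NeZero m] (C : ZMod m → Finset (ZMod m)) :
    (ZMod m ⊕ ZMod m) → ((ZMod m ⊕ ZMod m) → Bool) → ℝ :=
  fun p σ =>
    match p with
    | Sum.inl a =>
        if σ (Sum.inl a) = false ∧
            ((Finset.univ.filter fun j => a ∈ C j ∧ σ (Sum.inr j) = true).card = 0 ∨
             (Finset.univ.filter fun j => a ∈ C j ∧ σ (Sum.inr j) = true).card = 2 ∨
             (Finset.univ.filter fun j => a ∈ C j ∧ σ (Sum.inr j) = true).card = 3)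
        then 1 else 0
    | Sum.inr _ => 0

/-- The desired strategy sets: `O_{a_i} = {T_{a_i}}` for element players and
`O_{C_j} = {T_{C_j}, F_{C_j}}` for set players. -/
def dDesired (m : ℕ) : (ZMod m ⊕ ZMod m) → Set Bool :=
  fun p => match p with
  | Sum.inl _ => {true}
  | Sum.inr _ => Set.univ

/-- The number of set players around the element `a` that play `T` in the profile `σ`. -/
def tCount (m : ℕ) [NeZero m] (C : ZMod m → Finset (ZMod m)) (a : ZMod m)
    (σ : (ZMod m ⊕ ZMod m) → Bool) : ℕ :=
  (Finset.univ.filter fun j => a ∈ C j ∧ σ (Sum.inr j) = true).card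

open Classical in
/-- The payment promise attached to a cover `S`. Set players are paid only when the element
player `0` plays `F`, which never happens in an undominated profile. -/
noncomputable def coverPay (m : ℕ) [NeZero m] (C : ZMod m → Finset (ZMod m)) (S : Set (ZMod m)) :
    (ZMod m ⊕ ZMod m) → ((ZMod m ⊕ ZMod m) → Bool) → ℝ
  | Sum.inl a, σ => if σ (Sum.inl a) = true ∧ tCount m C a σ ≠ 1 then 2 else 0
  | Sum.inr j, σ => if σ (Sum.inr j) = decide (j ∈ S) ∧ σ (Sum.inl 0) = false then 1 else 0

open Classical in
/-- The `nh` sets of an exact cover have `3 * nh = m` incidences in total and each of the `m`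
elements has at least one, so each has exactly one. -/
lemma exactCover_count (m nh : ℕ) [NeZero m] (hm : m = 3 * nh)
    (C : ZMod m → Finset (ZMod m)) (hC : ∀ j : ZMod m, (C j).card = 3)
    (S : Set (ZMod m)) (hS : IsExactCover m nh C S) (a : ZMod m) :
    (Finset.univ.filter fun j => a ∈ C j ∧ j ∈ S).card = 1 := by
  obtain ⟨hcard, hcov⟩ := hS
  have hpos : ∀ b ∈ (Finset.univ : Finset (ZMod m)),
      1 ≤ (Finset.univ.filter fun j => b ∈ C j ∧ j ∈ S).card := by
    intro b _
    obtain ⟨j, hj, hb⟩ := hcov b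
    exact Finset.card_pos.mpr ⟨j, by simp [hj, hb]⟩
  have hSc : (Finset.univ.filter fun j => j ∈ S).card = nh := by
    rw [← hcard, Set.ncard_eq_toFinset_card']
    congr 1
    ext j
    simp
  have hsum : ∑ b : ZMod m, (Finset.univ.filter fun j => b ∈ C j ∧ j ∈ S).card = m := by
    have hdc := Finset.sum_card_bipartiteAbove_eq_sum_card_bipartiteBelow
      (s := (Finset.univ : Finset (ZMod m))) (t := Finset.univ.filter fun j => j ∈ S)
      (fun b j => b ∈ C j)
    simp only [Finset.bipartiteAbove, Finset.bipartiteBelow, Finset.filter_filter,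
      Finset.filter_univ_mem, hC, Finset.sum_const, hSc, smul_eq_mul] at hdc
    simp only [and_comm (a := _ ∈ C _)]
    rw [hdc, hm, mul_comm]
  have heq := (Finset.sum_eq_sum_iff_of_le hpos).mp (by simp [hsum, ZMod.card])
  exact (heq a (Finset.mem_univ a)).symm

lemma tCount_update (m : ℕ) [NeZero m] (C : ZMod m → Finset (ZMod m)) (a b : ZMod m)
    (σ : (ZMod m ⊕ ZMod m) → Bool) (x : Bool) :
    tCount m C a (Function.update σ (Sum.inl b) x) = tCount m C a σ := by
  simp [tCount]

lemma dGame_inl (m : ℕ) [NeZero m] (C : ZMod m → Finset (ZMod m)) (a : ZMod m)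
    (σ : (ZMod m ⊕ ZMod m) → Bool) :
    dGame m C (Sum.inl a) σ = if σ (Sum.inl a) = false ∧
      (tCount m C a σ = 0 ∨ tCount m C a σ = 2 ∨ tCount m C a σ = 3) then 1 else 0 := rfl

/-- Strictness is witnessed when all set players play `F`, where the count is `0`. -/
lemma elem_dominates (m : ℕ) [NeZero m] (C : ZMod m → Finset (ZMod m)) (S : Set (ZMod m))
    (a : ZMod m) :
    Dominates (S := fun _ => Bool) (fun p σ => dGame m C p σ + coverPay m C S p σ)
      (Sum.inl a) true false := by
  refine ⟨fun σ => ?_, fun _ => false, ?_⟩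
  · simp only [dGame_inl, coverPay, tCount_update, Function.update_self]
    by_cases h : tCount m C a σ = 1
    · simp [h]
    · simp only [ne_eq, h, not_false_eq_true, and_true, if_true, Bool.false_eq_true, if_false]
      split_ifs <;> norm_num
  · have h0 : tCount m C a (fun _ => false) = 0 := by simp [tCount]
    simp [dGame_inl, coverPay, tCount_update, h0]

open Classical in
lemma set_dominates (m : ℕ) [NeZero m] (C : ZMod m → Finset (ZMod m)) (S : Set (ZMod m))
    (j : ZMod m) :
    Dominates (S := fun _ => Bool) (fun p σ => dGame m C p σ + coverPay m C S p σ)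
      (Sum.inr j) (decide (j ∈ S)) (!decide (j ∈ S)) := by
  refine ⟨fun σ => ?_, fun _ => false, ?_⟩
  · simp only [dGame, coverPay, Function.update_self]
    split_ifs <;> simp_all
  · simp [dGame, coverPay]

open Classical in
lemma undom_profile (m : ℕ) [NeZero m] (C : ZMod m → Finset (ZMod m)) (S : Set (ZMod m))
    (σ : (ZMod m ⊕ ZMod m) → Bool)
    (hσ : σ ∈ UndomProfiles (fun p σ => dGame m C p σ + coverPay m C S p σ)) :
    (∀ a, σ (Sum.inl a) = true) ∧ ∀ j, σ (Sum.inr j) = decide (j ∈ S) := by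
  constructor
  · intro a
    by_contra h
    have hf : σ (Sum.inl a) = false := by simpa using h
    exact hσ (Sum.inl a) ⟨true, by rw [hf]; exact elem_dominates m C S a⟩
  · intro j
    by_contra h
    have hf : σ (Sum.inr j) = !decide (j ∈ S) := Bool.eq_not_of_ne h
    exact hσ (Sum.inr j) ⟨decide (j ∈ S), by rw [hf]; exact set_dominates m C S j⟩

/-- if the X3C instance admits an exact cover, then for every budget
`δ ≥ 0` there is a payment promise implementing the desired region with cost at
most `δ` in the degree-three game. -/
theorem deg3_forward (m nh : ℕ) [NeZero m] (hm : m = 3 * nh)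
    (C : ZMod m → Finset (ZMod m))
    (hC : ∀ j : ZMod m, (C j).card = 3)
    (hocc : ∀ a : ZMod m, Set.ncard {j : ZMod m | a ∈ C j} = 3)
    (hcover : ∃ S : Set (ZMod m), IsExactCover m nh C S) :
    ∀ δ : ℝ, 0 ≤ δ →
      ∃ V : (ZMod m ⊕ ZMod m) → ((ZMod m ⊕ ZMod m) → Bool) → ℝ,
        (∀ p σ, 0 ≤ V p σ) ∧
        UndomProfiles (fun p σ => dGame m C p σ + V p σ) ⊆ rectSet (dDesired m) ∧
        gameCost (dGame m C) V ≤ δ := by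
  classical
  intro δ hδ
  obtain ⟨S, hS⟩ := hcover
  refine ⟨coverPay m C S, ?_, ?_, ?_⟩
  · rintro (a | j) σ <;> simp only [coverPay] <;> split_ifs <;> norm_num
  · intro σ hσ
    obtain ⟨hT, -⟩ := undom_profile m C S σ hσ
    rintro (a | j)
    · exact hT a
    · exact Set.mem_univ _
  · refine le_trans (Real.sSup_le ?_ le_rfl) hδ
    rintro _ ⟨σ, hσ, rfl⟩
    obtain ⟨hT, hR⟩ := undom_profile m C S σ hσ
    refine le_of_eq (Finset.sum_eq_zero ?_)
    rintro (a | j) -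
    · have h1 : tCount m C a σ = 1 := by
        simpa [tCount, hR] using exactCover_count m nh hm C hC S hS a
      simp [coverPay, h1]
    · simp [coverPay, hT]
end

section
/- In the degree-three game G constructed from an X3C instance, let 0 ≤ δ < 1 and let 𝒱 be a payment promise with 𝒳⋆_{G[𝒱]} ⊆ ∏_{i∈N} O_i and cost(𝒱) ≤ δ. Then for every element a_i ∈ 𝒜 and every undominated strategy profile x ∈ 𝒳⋆_{G[𝒱]}, exactly one of the three set players C_i^1, C_i^2, C_i^3 containing a_i plays its T-strategy in x. -/
/-- The total payment on an undominated profile is at most the cost; finiteness of the game makes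
the supremum in `gameCost` a genuine upper bound. -/
lemma payment_le_gameCost {ι : Type*} [DecidableEq ι] [Fintype ι]
    (U V : ι → (ι → Bool) → ℝ) {x : ι → Bool}
    (hx : x ∈ UndomProfiles (fun i σ => U i σ + V i σ)) :
    ∑ i, V i x ≤ gameCost U V :=
  le_csSup (Set.toFinite _).bddAbove (Set.mem_image_of_mem _ hx)

/-- If no undominated profile has player `i` playing `false`, while some undominated profile
exists, then `true` dominates `false` for `i`. -/
lemma dominates_true_of_undesired {ι : Type*} [DecidableEq ι]
    (W : ι → (ι → Bool) → ℝ) (i : ι) {x : ι → Bool} (hx : x ∈ UndomProfiles W)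
    (hi : ∀ y ∈ UndomProfiles W, y i = true) :
    Dominates (S := fun _ => Bool) W i true false := by
  have hF : ¬ Undominated (S := fun _ => Bool) W i false := by
    intro hU
    have hmem : Function.update x i false ∈ UndomProfiles W := by
      intro k
      by_cases hk : k = i
      · subst hk
        simpa using hU
      · simpa [Function.update_of_ne hk] using hx k
    simpa using hi _ hmem
  obtain ⟨y, hy⟩ := not_not.mp hF
  cases y with
  | true => exact hy
  | false =>
    obtain ⟨σ, hσ⟩ := hy.2
    exact absurd hσ (lt_irrefl _)

/-- with `0 ≤ δ < 1` and a payment promise implementing the desired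
region of the degree-three game with cost at most `δ`, in every undominated strategy
profile, for every element `a` exactly one of the sets containing `a` plays its
`T`-strategy. -/
theorem deg3_claim1 (m nh : ℕ) [NeZero m] (hm : m = 3 * nh)
    (C : ZMod m → Finset (ZMod m))
    (hC : ∀ j : ZMod m, (C j).card = 3)
    (hocc : ∀ a : ZMod m, Set.ncard {j : ZMod m | a ∈ C j} = 3)
    (δ : ℝ) (hδ0 : 0 ≤ δ) (hδ1 : δ < 1)
    (V : (ZMod m ⊕ ZMod m) → ((ZMod m ⊕ ZMod m) → Bool) → ℝ)
    (hV : ∀ p σ, 0 ≤ V p σ)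
    (himpl : UndomProfiles (fun p σ => dGame m C p σ + V p σ) ⊆ rectSet (dDesired m))
    (hcost : gameCost (dGame m C) V ≤ δ) :
    ∀ a : ZMod m, ∀ x ∈ UndomProfiles (fun p σ => dGame m C p σ + V p σ),
      ∃! j : ZMod m, a ∈ C j ∧ x (Sum.inr j) = true := by
  intro a x hx
  have hT : ∀ y ∈ UndomProfiles (fun p σ => dGame m C p σ + V p σ), y (Sum.inl a) = true :=
    fun y hy => by simpa [dDesired] using himpl hy (Sum.inl a)
  have hxa := hT x hx
  have hdom := (dominates_true_of_undesired _ (Sum.inl a) hx hT).1 x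
  rw [← hxa, Function.update_eq_self] at hdom
  beta_reduce at hdom
  have hpay : V (Sum.inl a) x < 1 :=
    calc V (Sum.inl a) x ≤ ∑ p, V p x :=
          Finset.single_le_sum (f := fun p => V p x) (fun p _ => hV p x) (Finset.mem_univ _)
      _ ≤ gameCost (dGame m C) V := payment_le_gameCost _ _ hx
      _ ≤ δ := hcost
      _ < 1 := hδ1
  have hUx : dGame m C (Sum.inl a) x = 0 := by simp [dGame, hxa]
  have hlt : dGame m C (Sum.inl a) (Function.update x (Sum.inl a) false) < 1 := by
    have := hV (Sum.inl a) (Function.update x (Sum.inl a) false)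
    linarith
  have hle : (Finset.univ.filter fun j => a ∈ C j ∧ x (Sum.inr j) = true).card ≤ 3 := by
    rw [← hocc a, ← Set.ncard_coe_finset]
    exact Set.ncard_le_ncard (fun j hj => by simp at hj; exact hj.1) (Set.toFinite _)
  have hone : (Finset.univ.filter fun j => a ∈ C j ∧ x (Sum.inr j) = true).card = 1 := by
    by_contra hne
    refine hlt.ne ?_
    simp only [dGame, Function.update_self, ne_eq, reduceCtorEq, not_false_eq_true,
      Function.update_of_ne, true_and]
    exact if_pos (by omega)
  obtain ⟨j, hj⟩ := Finset.card_eq_one.mp hone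
  refine ⟨j, ?_, fun k hk => ?_⟩
  · have hmem := Finset.mem_singleton_self j
    rw [← hj] at hmem
    simpa using hmem
  · exact Finset.mem_singleton.mp (hj ▸ by simpa using hk)
end
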